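/- arXiv:1211.6884 — 6 statements merged into one kernel-verified Lean document; each statement's English description precedes it below -/
import Mathlib

section
/- Let W be a Weyl candidate on 4-dimensional Minkowski space and T its Bel–Robinson tensor. Then T is totally symmetric in its four indices (T a b c d is invariant under every permutation of (a,b,c,d)) and trace-free: ∑_{a,b} η a b · T a b c d = 0 for all c, d. -/
/-!
Write `R^{ab}_{cd}` for a Weyl candidate with its first index pair raised. In dimension four the
antisymmetrisation of `R^{ab}_{cd} δ^e_f` over `a, b, e` and over `c, d, f` vanishes (Lovelock),
because two triples out of four indices share at least two indices, so that what survives is a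
combination of traces of `R`. Contracting this linear identity with `R` itself gives two
quadratic ones: `4 R^{ea}_{cd} R^{cd}_{fa} = δ^e_f |R|²`, which says that the Bel–Robinson tensor is
trace-free, and a formula for `W_{apcm} W_b^p_d^m - W_{apbm} W_c^p_d^m`, which together with the
cyclic identity says that it is unchanged when its two middle indices are exchanged. The other two
adjacent transpositions are visible in the definition.
-/

/-- The Minkowski metric `η` on `Fin 4`: `η 0 0 = -1`, `η a a = 1` for `a ≠ 0`,
and `η a b = 0` for `a ≠ b`. -/
def eta (a b : Fin 4) : ℝ := if a = b then (if a = 0 then -1 else 1) else 0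

/-- A Weyl candidate on 4-dimensional Minkowski space. -/
def IsWeylCandidate (W : Fin 4 → Fin 4 → Fin 4 → Fin 4 → ℝ) : Prop :=
  (∀ a b c d, W a b c d = - W b a c d) ∧
  (∀ a b c d, W a b c d = - W a b d c) ∧
  (∀ a b c d, W a b c d = W c d a b) ∧
  (∀ a b c d, W a b c d + W a c d b + W a d b c = 0) ∧
  (∀ b c, ∑ p : Fin 4, ∑ q : Fin 4, eta p q * W p b q c = 0)

/-- The Bel–Robinson tensor of a Weyl candidate `W`. -/
noncomputable def belRobinson (W : Fin 4 → Fin 4 → Fin 4 → Fin 4 → ℝ) (a b c d : Fin 4) : ℝ :=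
  (∑ p : Fin 4, ∑ q : Fin 4, ∑ m : Fin 4, ∑ n : Fin 4,
      eta p q * eta m n * (W a p d m * W b q c n + W a m c p * W b n d q))
  - (1/8) * eta a b * eta c d *
      (∑ m : Fin 4, ∑ n : Fin 4, ∑ p : Fin 4, ∑ l : Fin 4, W m n p l *
        (∑ m' : Fin 4, ∑ n' : Fin 4, ∑ p' : Fin 4, ∑ l' : Fin 4,
          eta m m' * eta n n' * eta p p' * eta l l' * W m' n' p' l'))

open Finset

theorem apply_comp_perm_eq_of_swap {α β : Type*} {n : ℕ} {f : (Fin (n + 1) → α) → β}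
    (hf : ∀ (i : Fin n) (v : Fin (n + 1) → α), f (v ∘ Equiv.swap i.castSucc i.succ) = f v)
    (σ : Equiv.Perm (Fin (n + 1))) (v : Fin (n + 1) → α) : f (v ∘ σ) = f v := by
  have hσ : σ ∈ Submonoid.closure (Set.range fun i : Fin n => Equiv.swap i.castSucc i.succ) := by
    simp [Equiv.Perm.mclosure_swap_castSucc_succ]
  induction hσ using Submonoid.closure_induction generalizing v with
  | mem σ h =>
    obtain ⟨i, rfl⟩ := h
    exact hf i v
  | one => rfl
  | mul σ τ _ _ hσ hτ => exact (hτ (v ∘ σ)).trans (hσ v)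

/-- A trace-free double bivector `R^{ab}_{cd}`: an array antisymmetric in its two upper and in its
two lower indices whose contraction `R^{ab}_{ad}` vanishes. A Weyl tensor with its first index pair
raised is one; in this mixed form no metric is needed. -/
structure IsTraceFreeDoubleBivector {ι K : Type*} [Fintype ι] [CommRing K]
    (R : ι → ι → ι → ι → K) : Prop where
  swap_upper : ∀ a b c d, R b a c d = -R a b c d
  swap_lower : ∀ a b c d, R a b d c = -R a b c d
  trace_eq_zero : ∀ b d, ∑ a, R a b a d = 0

/-- The antisymmetrisation of `R^{ab}_{cd} δ^e_f` over the upper indices `a, b, e` and the lower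
indices `c, d, f`, normalised for an `R` that is antisymmetric in both pairs: a sum over the cyclic
permutations of either triple. -/
def wedgeDelta {ι K : Type*} [DecidableEq ι] [CommRing K] (R : ι → ι → ι → ι → K)
    (a b e c d f : ι) : K :=
  let δ : Matrix ι ι K := 1
  R a b c d * δ e f + R a b d f * δ e c + R a b f c * δ e d +
  R b e c d * δ a f + R b e d f * δ a c + R b e f c * δ a d +
  R e a c d * δ b f + R e a d f * δ b c + R e a f c * δ b d

/-- The contraction `R^{ea}_{cd} R^{cd}_{fa}`, with free indices `e` and `f`. -/
def contractedSquare {ι K : Type*} [Fintype ι] [CommRing K] (R : ι → ι → ι → ι → K)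
    (e f : ι) : K :=
  ∑ a, ∑ c, ∑ d, R e a c d * R c d f a

/-- The scalar `R^{ab}_{cd} R^{cd}_{ab}`. -/
def scalarSquare {ι K : Type*} [Fintype ι] [CommRing K] (R : ι → ι → ι → ι → K) : K :=
  ∑ a, ∑ b, ∑ c, ∑ d, R a b c d * R c d a b

namespace IsTraceFreeDoubleBivector

variable {ι K : Type*} [Fintype ι] [CommRing K] {R : ι → ι → ι → ι → K}

theorem trace_swap_eq_zero (hR : IsTraceFreeDoubleBivector R) (b c : ι) :
    ∑ a, R a b c a = 0 := by
  simp [hR.swap_lower _ b _ c, hR.trace_eq_zero]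

section Contraction

variable [DecidableEq ι]

theorem sum_wedgeDelta_mul_of_antisymm (hR : IsTraceFreeDoubleBivector R) {S : ι → ι → K}
    (hS : ∀ c d, S d c = -S c d) (a b e f : ι) :
    ∑ c, ∑ d, wedgeDelta R a b e c d f * S c d =
      (1 : Matrix ι ι K) e f * ∑ c, ∑ d, R a b c d * S c d +
      (1 : Matrix ι ι K) a f * ∑ c, ∑ d, R b e c d * S c d +
      (1 : Matrix ι ι K) b f * ∑ c, ∑ d, R e a c d * S c d +
      2 * ∑ d, (R a b d f * S e d + R b e d f * S a d + R e a d f * S b d) := by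
  simp only [wedgeDelta, Matrix.one_apply, mul_ite, mul_one, mul_zero, add_mul, ite_mul, zero_mul,
    one_mul, sum_add_distrib, sum_ite_irrel, sum_const_zero, sum_ite_eq, mem_univ, if_true,
    hR.swap_lower _ _ _ f, hS e, hS a, hS b, neg_mul, mul_neg, sum_neg_distrib]
  ring

theorem sum_wedgeDelta_mul_full (hR : IsTraceFreeDoubleBivector R) (e f : ι) :
    ∑ a, ∑ b, ∑ c, ∑ d, wedgeDelta R a b e c d f * R c d a b =
      (1 : Matrix ι ι K) e f * scalarSquare R - 4 * contractedSquare R e f := by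
  -- Each fact is named after the Kronecker delta whose term it evaluates.
  have trace_ac : ∑ a, ∑ b, ∑ d, R b e d f * R a d a b = 0 := by
    rw [← sum_comm_cycle]
    simp [← mul_sum, hR.trace_eq_zero]
  have trace_bc : ∑ a, ∑ b, ∑ d, R e a d f * R b d a b = 0 := by
    refine sum_eq_zero fun a _ => ?_
    rw [sum_comm]
    simp [← mul_sum, hR.trace_swap_eq_zero]
  have square_ec : ∑ a, ∑ b, ∑ d, R a b d f * R e d a b = -contractedSquare R e f := by
    rw [sum_comm_cycle]
    simp [contractedSquare, hR.swap_lower _ _ f, mul_comm]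
  have square_af : ∑ b, ∑ c, ∑ d, R b e c d * R c d f b = -contractedSquare R e f := by
    simp [contractedSquare, hR.swap_upper e]
  have square_bf : ∑ a, ∑ c, ∑ d, R e a c d * R c d a f = -contractedSquare R e f := by
    simp [contractedSquare, hR.swap_lower _ _ f]
  simp only [hR.sum_wedgeDelta_mul_of_antisymm fun c d => hR.swap_upper c d _ _,
    sum_add_distrib, ← mul_sum, trace_ac, trace_bc, square_ec]
  simp only [Matrix.one_apply, ite_mul, one_mul, zero_mul, sum_ite_eq', mem_univ, if_true,
    square_af, square_bf, add_zero, mul_neg, scalarSquare]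
  ring

theorem sum_wedgeDelta_mul_partial (hR : IsTraceFreeDoubleBivector R) (a b c d : ι) :
    ∑ p, ∑ m, ∑ n, wedgeDelta R p b c m n d * R m n a p =
      ∑ p, ∑ m, R b c p m * R p m a d +
        2 * ∑ p, ∑ m, (R p b m d * R c m a p + R c p m d * R b m a p) -
        ((1 : Matrix ι ι K) c d * contractedSquare R b a -
          (1 : Matrix ι ι K) b d * contractedSquare R c a) := by
  have trace_pm : ∑ p, ∑ m, R b c m d * R p m a p = 0 := by
    rw [sum_comm]
    simp [← mul_sum, hR.trace_swap_eq_zero]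
  have square_cd : ∑ p, ∑ m, ∑ n, R p b m n * R m n a p = -contractedSquare R b a := by
    simp [contractedSquare, hR.swap_upper b]
  simp only [hR.sum_wedgeDelta_mul_of_antisymm fun m n => hR.swap_upper m n _ _,
    sum_add_distrib, ← mul_sum, trace_pm, square_cd]
  simp only [Matrix.one_apply, contractedSquare, mul_neg, ite_mul, one_mul, zero_mul, sum_ite_eq',
    mem_univ, if_true, add_zero]
  ring

end Contraction

variable [NoZeroDivisors K] [NeZero (2 : K)]

theorem upper_self (hR : IsTraceFreeDoubleBivector R) (a c d : ι) : R a a c d = 0 := by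
  have h : 2 * R a a c d = 0 := by linear_combination hR.swap_upper a a c d
  exact (mul_eq_zero.1 h).resolve_left two_ne_zero

theorem lower_self (hR : IsTraceFreeDoubleBivector R) (a b c : ι) : R a b c c = 0 := by
  have h : 2 * R a b c c = 0 := by linear_combination hR.swap_lower a b c c
  exact (mul_eq_zero.1 h).resolve_left two_ne_zero

variable [DecidableEq ι]

theorem wedgeDelta_eq_zero_of_ne (hR : IsTraceFreeDoubleBivector R) (hι : Fintype.card ι = 4)
    {a b e : ι} (hab : a ≠ b) (hbe : b ≠ e) (hae : a ≠ e) (c d f : ι) :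
    wedgeDelta R a b e c d f = 0 := by
  obtain ⟨h, hmem, huniv⟩ : ∃ h ∉ ({a, b, e} : Finset ι), insert h {a, b, e} = univ :=
    exists_eq_insert_iff.2
      ⟨subset_univ _, by rw [card_eq_three.2 ⟨a, b, e, hab, hae, hbe, rfl⟩, card_univ, hι]⟩
  have trace : ∀ x y, R h x h y + (R a x a y + (R b x b y + R e x e y)) = 0 := fun x y => by
    rw [← hR.trace_eq_zero x y, ← huniv, sum_insert hmem, sum_insert (by simp [hab, hae]),
      sum_pair hbe]
  have upper_swap := hR.swap_upper
  have lower_swap := hR.swap_lower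
  have upper_self := hR.upper_self
  have lower_self := hR.lower_self
  -- The traces over `a, b, e` minus the trace over `h` count each of the three terms twice.
  have diagonal : R a b a b + R b e b e + R e a e a = 0 := by
    have : 2 * (R a b a b + R b e b e + R e a e a) = 0 := by grind
    exact (mul_eq_zero.1 this).resolve_left two_ne_zero
  have cases_index : ∀ x, x = h ∨ x = a ∨ x = b ∨ x = e := fun x => by
    simpa [← huniv] using mem_univ x
  -- If `c, d, f` are `a, b, e`, this is `diagonal`; otherwise they contain `h` and two of
  -- `a, b, e`, and this is an off-diagonal trace.
  simp only [wedgeDelta, Matrix.one_apply]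
  rcases cases_index c with rfl | rfl | rfl | rfl <;>
    rcases cases_index d with rfl | rfl | rfl | rfl <;>
    rcases cases_index f with rfl | rfl | rfl | rfl <;> grind

theorem wedgeDelta_eq_zero (hR : IsTraceFreeDoubleBivector R) (hι : Fintype.card ι = 4)
    (a b e c d f : ι) : wedgeDelta R a b e c d f = 0 := by
  by_cases hab : a = b
  · subst hab
    simp only [wedgeDelta, hR.upper_self, hR.swap_upper a e]
    ring
  by_cases hbe : b = e
  · subst hbe
    simp only [wedgeDelta, hR.upper_self, hR.swap_upper a b]
    ring
  by_cases hae : a = e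
  · subst hae
    simp only [wedgeDelta, hR.upper_self, hR.swap_upper a b]
    ring
  exact hR.wedgeDelta_eq_zero_of_ne hι hab hbe hae c d f

theorem four_mul_contractedSquare (hR : IsTraceFreeDoubleBivector R) (hι : Fintype.card ι = 4)
    (e f : ι) : 4 * contractedSquare R e f = (1 : Matrix ι ι K) e f * scalarSquare R := by
  have h := hR.sum_wedgeDelta_mul_full e f
  simp only [hR.wedgeDelta_eq_zero hι, zero_mul, sum_const_zero] at h
  linear_combination h

theorem four_mul_sum_pair_add_sum_cross (hR : IsTraceFreeDoubleBivector R)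
    (hι : Fintype.card ι = 4) (a b c d : ι) :
    4 * (∑ p, ∑ m, R b c p m * R p m a d +
        2 * ∑ p, ∑ m, (R p b m d * R c m a p + R c p m d * R b m a p)) =
      ((1 : Matrix ι ι K) c d * (1 : Matrix ι ι K) b a -
        (1 : Matrix ι ι K) b d * (1 : Matrix ι ι K) c a) * scalarSquare R := by
  have h := hR.sum_wedgeDelta_mul_partial a b c d
  simp only [hR.wedgeDelta_eq_zero hι, zero_mul, sum_const_zero] at h
  linear_combination -4 * h + (1 : Matrix ι ι K) c d * hR.four_mul_contractedSquare hι b a -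
    (1 : Matrix ι ι K) b d * hR.four_mul_contractedSquare hι c a

end IsTraceFreeDoubleBivector

theorem eta_mul_self (a : Fin 4) : eta a a * eta a a = 1 := by
  by_cases ha : a = 0 <;> simp [eta, ha]

theorem eta_eq_mul_one (a b : Fin 4) : eta a b = eta a a * (1 : Matrix (Fin 4) (Fin 4) ℝ) a b := by
  simp only [eta, Matrix.one_apply]
  split_ifs <;> simp

theorem eta_comm (a b : Fin 4) : eta a b = eta b a := by
  unfold eta
  split_ifs <;> simp_all

theorem sum_eta_mul (a : Fin 4) (f : Fin 4 → ℝ) : ∑ b, eta a b * f b = eta a a * f a := by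
  simp [eta]

/-- The mixed components `W^{ab}_{cd}`. As `η` is diagonal, raising an index multiplies by the
corresponding diagonal entry. -/
def raiseFirstPair (W : Fin 4 → Fin 4 → Fin 4 → Fin 4 → ℝ) (a b c d : Fin 4) : ℝ :=
  eta a a * eta b b * W a b c d

/-- The Kretschmann scalar `W_{mnpl} W^{mnpl}`. -/
def kretschmannScalar (W : Fin 4 → Fin 4 → Fin 4 → Fin 4 → ℝ) : ℝ :=
  ∑ m, ∑ n, ∑ p, ∑ l, eta m m * eta n n * eta p p * eta l l * W m n p l ^ 2

/-- The contraction `W_{apcm} W_b^p_d^m`, from which the Bel–Robinson tensor is built. -/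
def crossSquare (W : Fin 4 → Fin 4 → Fin 4 → Fin 4 → ℝ) (a b c d : Fin 4) : ℝ :=
  ∑ p, ∑ m, eta p p * eta m m * (W a p c m * W b p d m)

/-- The contraction `W_{abpm} W_{cd}^{pm}` over an index pair. -/
def pairSquare (W : Fin 4 → Fin 4 → Fin 4 → Fin 4 → ℝ) (a b c d : Fin 4) : ℝ :=
  ∑ p, ∑ m, eta p p * eta m m * (W a b p m * W c d p m)

section

variable {W : Fin 4 → Fin 4 → Fin 4 → Fin 4 → ℝ}

theorem scalarSquare_raiseFirstPair (hW : ∀ a b c d, W a b c d = W c d a b) :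
    scalarSquare (raiseFirstPair W) = kretschmannScalar W := by
  unfold scalarSquare kretschmannScalar raiseFirstPair
  refine sum_congr rfl fun m _ => sum_congr rfl fun n _ => sum_congr rfl fun p _ =>
    sum_congr rfl fun l _ => ?_
  rw [hW p l m n]
  ring

theorem contractedSquare_raiseFirstPair (hW : ∀ a b c d, W a b c d = W c d a b)
    (c d : Fin 4) :
    contractedSquare (raiseFirstPair W) c d = eta c c * ∑ a, eta a a * crossSquare W a a c d := by
  simp only [contractedSquare, crossSquare, raiseFirstPair, mul_sum]
  rw [sum_comm_cycle, sum_comm_cycle]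
  refine sum_congr rfl fun a _ => sum_congr rfl fun p _ => sum_congr rfl fun m _ => ?_
  rw [hW c m a p]
  ring

theorem crossSquare_swap_swap (a b c d : Fin 4) :
    crossSquare W b a d c = crossSquare W a b c d := by
  simp only [crossSquare, mul_comm (W b _ _ _)]

theorem belRobinson_eq (a b c d : Fin 4) :
    belRobinson W a b c d =
      crossSquare W a b d c + crossSquare W a b c d -
        1 / 8 * eta a b * eta c d * kretschmannScalar W := by
  unfold belRobinson
  simp only [mul_assoc, ← mul_sum, sum_eta_mul]
  congr 1
  · simp only [crossSquare, mul_add, sum_add_distrib, mul_sum, mul_assoc]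
    congr 1
    rw [sum_comm]
    simp only [mul_left_comm]
  · simp only [kretschmannScalar, mul_sum]
    refine sum_congr rfl fun m _ => sum_congr rfl fun n _ => sum_congr rfl fun p _ =>
      sum_congr rfl fun l _ => ?_
    ring

theorem belRobinson_swap_left (a b c d : Fin 4) :
    belRobinson W b a c d = belRobinson W a b c d := by
  rw [belRobinson_eq, belRobinson_eq, eta_comm b a, crossSquare_swap_swap a b c d,
    crossSquare_swap_swap a b d c, add_comm (crossSquare W a b c d)]

theorem belRobinson_swap_right (a b c d : Fin 4) :
    belRobinson W a b d c = belRobinson W a b c d := by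
  rw [belRobinson_eq, belRobinson_eq, eta_comm d c, add_comm (crossSquare W a b c d)]

end

namespace IsWeylCandidate

variable {W : Fin 4 → Fin 4 → Fin 4 → Fin 4 → ℝ}

theorem isTraceFreeDoubleBivector_raiseFirstPair (hW : IsWeylCandidate W) :
    IsTraceFreeDoubleBivector (raiseFirstPair W) := by
  obtain ⟨swap_left, swap_right, -, -, trace⟩ := hW
  refine ⟨fun a b c d => ?_, fun a b c d => ?_, fun b d => ?_⟩
  · rw [raiseFirstPair, raiseFirstPair, swap_left b a]
    ring
  · rw [raiseFirstPair, raiseFirstPair, swap_right a b d c]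
    ring
  · have h := trace b d
    simp only [sum_eta_mul] at h
    simp only [raiseFirstPair, mul_comm _ (eta b b), mul_assoc, ← mul_sum, h, mul_zero]

theorem four_mul_sum_eta_mul_crossSquare (hW : IsWeylCandidate W) (c d : Fin 4) :
    4 * ∑ a, eta a a * crossSquare W a a c d = eta c d * kretschmannScalar W := by
  have swap_pairs := hW.2.2.1
  have h := hW.isTraceFreeDoubleBivector_raiseFirstPair.four_mul_contractedSquare
    (Fintype.card_fin 4) c d
  rw [contractedSquare_raiseFirstPair swap_pairs, scalarSquare_raiseFirstPair swap_pairs] at h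
  rw [eta_eq_mul_one c d]
  linear_combination eta c c * h -
    (4 * ∑ a, eta a a * crossSquare W a a c d) * eta_mul_self c

theorem crossSquare_sub_eq_pairSquare (hW : IsWeylCandidate W) (a b c d : Fin 4) :
    crossSquare W a b d c - crossSquare W a c d b = 1 / 2 * pairSquare W b c a d := by
  obtain ⟨-, swap_right, swap_pairs, cyclic, -⟩ := hW
  have cross_sub : crossSquare W a b d c - crossSquare W a c d b =
      ∑ p, ∑ m, eta p p * eta m m * (W a p d m * W b c p m) := by
    simp only [crossSquare, ← sum_sub_distrib]
    refine sum_congr rfl fun p _ => sum_congr rfl fun m _ => ?_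
    have cyclic_bc : W b p c m - W c p b m = W b c p m := by
      linear_combination cyclic b p c m - swap_pairs c p b m - swap_right b m c p -
        swap_right b c m p
    rw [← cyclic_bc]
    ring
  have relabel : ∑ p, ∑ m, eta p p * eta m m * (W a p d m * W b c p m) =
      ∑ p, ∑ m, eta p p * eta m m * -(W a m d p * W b c p m) := by
    rw [sum_comm]
    refine sum_congr rfl fun p _ => sum_congr rfl fun m _ => ?_
    rw [swap_right b c m p]
    ring
  have pair_eq : pairSquare W b c a d = ∑ p, ∑ m, eta p p * eta m m * (W a p d m * W b c p m) +
      ∑ p, ∑ m, eta p p * eta m m * -(W a m d p * W b c p m) := by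
    simp only [pairSquare, ← sum_add_distrib]
    refine sum_congr rfl fun p _ => sum_congr rfl fun m _ => ?_
    have cyclic_ad : W a d p m = W a p d m - W a m d p := by
      linear_combination cyclic a d p m - swap_right a p m d
    rw [cyclic_ad]
    ring
  rw [cross_sub, pair_eq, ← relabel]
  ring

theorem pairSquare_add_two_mul_crossSquare_sub (hW : IsWeylCandidate W) (a b c d : Fin 4) :
    4 * (pairSquare W b c a d + 2 * (crossSquare W a b c d - crossSquare W a c b d)) =
      (eta a b * eta c d - eta a c * eta b d) * kretschmannScalar W := by
  have h := hW.isTraceFreeDoubleBivector_raiseFirstPair.four_mul_sum_pair_add_sum_cross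
    (Fintype.card_fin 4) a b c d
  obtain ⟨swap_left, swap_right, swap_pairs, -, -⟩ := hW
  rw [scalarSquare_raiseFirstPair swap_pairs] at h
  have pair_eq : ∑ p, ∑ m, raiseFirstPair W b c p m * raiseFirstPair W p m a d =
      eta b b * eta c c * pairSquare W b c a d := by
    simp only [pairSquare, raiseFirstPair, mul_sum]
    refine sum_congr rfl fun p _ => sum_congr rfl fun m _ => ?_
    rw [swap_pairs p m a d]
    ring
  have cross_eq : ∑ p, ∑ m, (raiseFirstPair W p b m d * raiseFirstPair W c m a p +
        raiseFirstPair W c p m d * raiseFirstPair W b m a p) =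
      eta b b * eta c c * (crossSquare W a b c d - crossSquare W a c b d) := by
    simp only [crossSquare, raiseFirstPair, ← sum_sub_distrib, mul_sum]
    refine sum_congr rfl fun p _ => sum_congr rfl fun m _ => ?_
    rw [swap_pairs c m a p, swap_pairs b m a p, swap_left p b m d, swap_right b p m d,
      swap_right c p m d]
    ring
  rw [pair_eq, cross_eq] at h
  rw [eta_comm a b, eta_comm a c, eta_eq_mul_one b a, eta_eq_mul_one c d, eta_eq_mul_one c a,
    eta_eq_mul_one b d]
  linear_combination eta b b * eta c c * h -
    4 * (pairSquare W b c a d + 2 * (crossSquare W a b c d - crossSquare W a c b d)) *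
      (eta b b ^ 2 * eta_mul_self c + eta_mul_self b)

theorem belRobinson_swap_mid (hW : IsWeylCandidate W) (a b c d : Fin 4) :
    belRobinson W a c b d = belRobinson W a b c d := by
  rw [belRobinson_eq, belRobinson_eq]
  linear_combination -hW.crossSquare_sub_eq_pairSquare a b c d -
    1 / 8 * hW.pairSquare_add_two_mul_crossSquare_sub a b c d

theorem sum_eta_mul_belRobinson (hW : IsWeylCandidate W) (c d : Fin 4) :
    ∑ a, ∑ b, eta a b * belRobinson W a b c d = 0 := by
  have h (a : Fin 4) : eta a a * belRobinson W a a c d =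
      eta a a * crossSquare W a a d c + eta a a * crossSquare W a a c d -
        1 / 8 * eta c d * kretschmannScalar W := by
    rw [belRobinson_eq]
    linear_combination -(1 / 8 * eta c d * kretschmannScalar W) * eta_mul_self a
  simp only [sum_eta_mul, h, sum_sub_distrib, sum_add_distrib, sum_const, card_univ,
    Fintype.card_fin, nsmul_eq_mul]
  linear_combination 1 / 4 * hW.four_mul_sum_eta_mul_crossSquare d c +
    1 / 4 * hW.four_mul_sum_eta_mul_crossSquare c d + 1 / 4 * kretschmannScalar W * eta_comm d c

end IsWeylCandidate

/-- The Bel–Robinson tensor of a Weyl candidate is totally symmetric in its four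
indices and trace-free. -/
theorem stmt_10 (W : Fin 4 → Fin 4 → Fin 4 → Fin 4 → ℝ) (hW : IsWeylCandidate W) :
    (∀ (σ : Equiv.Perm (Fin 4)) (v : Fin 4 → Fin 4),
      belRobinson W (v (σ 0)) (v (σ 1)) (v (σ 2)) (v (σ 3)) =
        belRobinson W (v 0) (v 1) (v 2) (v 3)) ∧
    (∀ c d, ∑ a : Fin 4, ∑ b : Fin 4, eta a b * belRobinson W a b c d = 0) := by
  refine ⟨fun σ v => ?_, hW.sum_eta_mul_belRobinson⟩
  refine apply_comp_perm_eq_of_swap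
    (f := fun v : Fin 4 → Fin 4 => belRobinson W (v 0) (v 1) (v 2) (v 3)) (fun i v => ?_) σ v
  fin_cases i
  · exact belRobinson_swap_left _ _ _ _
  · exact hW.belRobinson_swap_mid _ _ _ _
  · exact belRobinson_swap_right _ _ _ _
end

section
/- Let F : Fin 4 → Fin 4 → ℝ be antisymmetric and t its energy-momentum tensor. Then t is symmetric (t a b = t b a), trace-free (∑_{a,b} η a b · t a b = 0), and satisfies the algebraic identity ∑_{c,d} t a c · η c d · t b d = (1/4) · η a b · ∑_{c,d,e,f} η c e · η d f · t c d · t e f for all a, b. -/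
/-- The energy-momentum tensor of an antisymmetric 2-form `F` on Minkowski space. -/
noncomputable def emTensor (F : Fin 4 → Fin 4 → ℝ) (a b : Fin 4) : ℝ :=
  (∑ c : Fin 4, ∑ d : Fin 4, eta c d * F a c * F b d)
  - (1/4) * eta a b *
      (∑ c : Fin 4, ∑ d : Fin 4, ∑ e : Fin 4, ∑ f : Fin 4,
        eta c e * eta d f * F c d * F e f)

/-!
Let `A = F g⁻¹` be the mixed form of `F`. Since `F` is antisymmetric and `g` symmetric, `A` and `-A`
have the same characteristic polynomial, so in dimension four it is `q(X²)` for a monic quadratic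
`q`, and Cayley–Hamilton reads `q(A²) = 0`. By `det(X² - A²) = det(X - A) det(X + A) = q(X²)²`,
the matrix `A²` has characteristic polynomial `q²`, so `q = X² - (tr A² / 2) X + c`. Completing the
square in `q(A²) = 0` shows that `A² - (tr A² / 4) 1`, which is minus the mixed energy-momentum
tensor, squares to a scalar matrix; taking traces identifies the scalar.
-/

section EvenPolynomial

open Polynomial

lemma expand_contract_of_coeff_eq_zero {R : Type*} [CommSemiring R] {p : R[X]} {m : ℕ}
    (hm : 0 < m) (hp : ∀ k, ¬m ∣ k → p.coeff k = 0) : expand R m (contract m p) = p := by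
  ext k
  rw [coeff_expand hm, coeff_contract hm.ne']
  split_ifs with hk
  · rw [Nat.div_mul_cancel hk]
  · exact (hp k hk).symm

lemma coeff_comp_neg_X {R : Type*} [Ring R] (p : R[X]) (k : ℕ) :
    (p.comp (-X)).coeff k = p.coeff k * (-1) ^ k := by
  rw [show (-X : R[X]) = C (-1) * X by simp, comp_C_mul_X_coeff]

lemma expand_two_contract_two_of_comp_neg_X {R : Type*} [CommRing R] {p : R[X]}
    (h2 : IsLeftRegular (2 : R)) (hp : p.comp (-X) = p) : expand R 2 (contract 2 p) = p := by
  refine expand_contract_of_coeff_eq_zero two_pos fun k hk ↦ ?_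
  have hodd : Odd k := Nat.not_even_iff_odd.mp (even_iff_two_dvd.not.mpr hk)
  have hneg : p.coeff k = -p.coeff k := by
    conv_lhs => rw [← hp, coeff_comp_neg_X, hodd.neg_one_pow, mul_neg_one]
  exact h2 (by linear_combination hneg)

end EvenPolynomial

section Charpoly

open Matrix Polynomial

variable {n R : Type*} [Fintype n] [DecidableEq n] [CommRing R]

lemma charpoly_neg_eq_comp_neg_X (A : Matrix n n R) :
    (-A).charpoly = (-1) ^ Fintype.card n * A.charpoly.comp (-X) := by
  rw [charpoly, charpoly, ← coe_compRingHom_apply, RingHom.map_det, ← det_neg]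
  congr 1
  ext1 i j
  by_cases hij : i = j
  · simp [hij, sub_eq_add_neg, add_comm]
  · simp [hij]

lemma charmatrix_mul_charmatrix_neg (A : Matrix n n R) :
    A.charmatrix * (-A).charmatrix = (expand R 2).mapMatrix (A ^ 2).charmatrix := by
  have hmap : (expand R 2).mapMatrix (A ^ 2).charmatrix =
      scalar n (X ^ 2 : R[X]) - C.mapMatrix (A ^ 2) := by
    ext1 i j
    by_cases hij : i = j
    · simp [hij]
    · simp [hij]
  have hcomm : Commute (scalar n (X : R[X])) (C.mapMatrix A) := scalar_commute _ (.all _) _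
  rw [hmap, charmatrix, charmatrix, map_neg, sub_neg_eq_add, map_pow, map_pow, sq, sq,
    hcomm.mul_self_sub_mul_self_eq']

lemma expand_two_charpoly_sq (A : Matrix n n R) :
    expand R 2 (A ^ 2).charpoly = A.charpoly * (-A).charpoly := by
  rw [charpoly, AlgHom.map_det, ← charmatrix_mul_charmatrix_neg, det_mul, charpoly, charpoly]

lemma charpoly_neg_mul_of_transpose_eq_neg {F S : Matrix n n R} (hF : Fᵀ = -F) (hS : S.IsSymm) :
    (-(F * S)).charpoly = (F * S).charpoly := by
  rw [← charpoly_transpose, transpose_neg, transpose_mul, hF, hS.eq, mul_neg, neg_neg,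
    charpoly_mul_comm]

variable {A : Matrix n n R}

lemma exists_expand_two_eq_charpoly (h2 : IsLeftRegular (2 : R)) (hn : Even (Fintype.card n))
    (hA : (-A).charpoly = A.charpoly) : ∃ q : R[X], expand R 2 q = A.charpoly := by
  have hcomp : A.charpoly.comp (-X) = A.charpoly := by
    rwa [charpoly_neg_eq_comp_neg_X, hn.neg_one_pow, one_mul] at hA
  exact ⟨_, expand_two_contract_two_of_comp_neg_X h2 hcomp⟩

lemma charpoly_sq_of_expand_two_eq {q : R[X]} (hA : (-A).charpoly = A.charpoly)
    (hq : expand R 2 q = A.charpoly) : (A ^ 2).charpoly = q ^ 2 :=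
  expand_injective two_pos <| by rw [expand_two_charpoly_sq, hA, map_pow, hq, sq]

lemma aeval_sq_of_expand_two_eq {q : R[X]} (hq : expand R 2 q = A.charpoly) :
    aeval (A ^ 2) q = 0 := by
  rw [← expand_aeval, hq, aeval_self_charpoly]

end Charpoly

section Field

open Matrix Polynomial

variable {K : Type*} [Field K]

lemma four_ne_zero_of_two_ne_zero (h2 : (2 : K) ≠ 0) : (4 : K) ≠ 0 := by
  rw [show (4 : K) = 2 * 2 by norm_num]
  exact mul_ne_zero h2 h2

lemma add_half_smul_one_sq {B : Type*} [Ring B] [Algebra K B] (h2 : (2 : K) ≠ 0)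
    {x : B} {b c : K} (hx : x ^ 2 + b • x + c • 1 = 0) :
    (x + (b / 2) • 1) ^ 2 = ((b / 2) ^ 2 - c) • (1 : B) := by
  have hsq : (x + (b / 2) • 1) ^ 2 = x ^ 2 + (b / 2 + b / 2) • x + (b / 2) ^ 2 • (1 : B) := by
    simp only [sq, add_mul, mul_add, smul_mul_assoc, mul_smul_comm, one_mul, mul_one]
    module
  have hb : b / 2 + b / 2 = b := by field_simp; ring
  rw [hsq, hb, eq_neg_of_add_eq_zero_left hx]
  module

lemma exists_sq_sub_trace_smul_one_sq_eq_smul_one {n : Type*} [Fintype n] [DecidableEq n]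
    (h2 : (2 : K) ≠ 0) (hn : Fintype.card n = 4) {A : Matrix n n K}
    (hA : (-A).charpoly = A.charpoly) :
    ∃ k : K, (A ^ 2 - (trace (A ^ 2) / 4) • 1) ^ 2 = k • (1 : Matrix n n K) := by
  obtain ⟨q, hq⟩ :=
    exists_expand_two_eq_charpoly (mul_right_injective₀ h2) (hn ▸ by decide) hA
  have hmonic : q.Monic := (monic_expand_iff two_pos).mp (hq ▸ charpoly_monic A)
  have hdeg : q.natDegree = 2 := by
    have := natDegree_expand 2 q
    rw [hq, charpoly_natDegree_eq_dim, hn] at this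
    lia
  have htrace : trace (A ^ 2) = -(2 * q.coeff 1) := by
    rw [trace_eq_neg_charpoly_nextCoeff, charpoly_sq_of_expand_two_eq hA hq, hmonic.nextCoeff_pow,
      nextCoeff_of_natDegree_pos (by lia), hdeg, nsmul_eq_mul, Nat.cast_ofNat]
  have hquad : (A ^ 2) ^ 2 + q.coeff 1 • A ^ 2 + q.coeff 0 • 1 = 0 := by
    rw [← aeval_sq_of_expand_two_eq hq, aeval_eq_sum_range, hdeg]
    have hlead : q.coeff 2 = 1 := hdeg ▸ hmonic.coeff_natDegree
    simp only [Finset.sum_range_succ, Finset.sum_range_zero, hlead, pow_zero, pow_one, one_smul]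
    abel
  have hhalf : trace (A ^ 2) / 4 = -(q.coeff 1 / 2) := by
    have h4 := four_ne_zero_of_two_ne_zero h2
    rw [htrace]
    field_simp
    ring
  refine ⟨(q.coeff 1 / 2) ^ 2 - q.coeff 0, ?_⟩
  rw [hhalf, neg_smul, sub_neg_eq_add, add_half_smul_one_sq h2 hquad]

end Field

section EnergyMomentum

open Matrix

variable {n K : Type*} [Fintype n] [DecidableEq n] [Field K]

/-- The energy-momentum tensor `t_{ab} = F_{ac} F_b{}^c - (1/4) g_{ab} F_{cd} F^{cd}` of a 2-form
`F` with respect to a metric `g`. All three matrices hold lower-index components; indices are raised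
with `g⁻¹`, so that `energyMomentum g F * g⁻¹` is the mixed form `t_a{}^b`. -/
noncomputable def energyMomentum (g F : Matrix n n K) : Matrix n n K :=
  F * g⁻¹ * Fᵀ - (1 / 4 * trace (F * g⁻¹ * Fᵀ * g⁻¹)) • g

variable {g F : Matrix n n K}

lemma isSymm_energyMomentum (hg : g.IsSymm) : (energyMomentum g F).IsSymm := by
  rw [IsSymm, energyMomentum]
  simp only [transpose_sub, transpose_smul, transpose_mul, transpose_transpose,
    transpose_nonsing_inv, hg.eq, Matrix.mul_assoc]

lemma trace_energyMomentum_mul_inv (h2 : (2 : K) ≠ 0) (hn : Fintype.card n = 4)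
    (hdet : IsUnit g.det) : trace (energyMomentum g F * g⁻¹) = 0 := by
  have h4 := four_ne_zero_of_two_ne_zero h2
  rw [energyMomentum, sub_mul, smul_mul, mul_nonsing_inv g hdet, trace_sub, trace_smul, trace_one,
    hn, smul_eq_mul, Nat.cast_ofNat]
  field_simp
  ring

lemma energyMomentum_mul_inv (hdet : IsUnit g.det) (hF : Fᵀ = -F) :
    energyMomentum g F * g⁻¹ = -((F * g⁻¹) ^ 2 - (trace ((F * g⁻¹) ^ 2) / 4) • 1) := by
  have hsq : F * g⁻¹ * Fᵀ * g⁻¹ = -(F * g⁻¹) ^ 2 := by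
    rw [hF, mul_neg, neg_mul, Matrix.mul_assoc, sq]
  rw [energyMomentum, sub_mul, smul_mul, mul_nonsing_inv g hdet, hsq, trace_neg]
  module

lemma energyMomentum_mul_inv_mul_transpose (h2 : (2 : K) ≠ 0) (hn : Fintype.card n = 4)
    (hg : g.IsSymm) (hdet : IsUnit g.det) (hF : Fᵀ = -F) :
    energyMomentum g F * g⁻¹ * (energyMomentum g F)ᵀ =
      (1 / 4 * trace (energyMomentum g F * g⁻¹ * (energyMomentum g F)ᵀ * g⁻¹)) • g := by
  have h4 := four_ne_zero_of_two_ne_zero h2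
  have hginv : g⁻¹.IsSymm := by rw [IsSymm, transpose_nonsing_inv, hg.eq]
  obtain ⟨k, hk⟩ := exists_sq_sub_trace_smul_one_sq_eq_smul_one h2 hn
    (charpoly_neg_mul_of_transpose_eq_neg hF hginv)
  rw [(isSymm_energyMomentum hg).eq]
  have hmixed : energyMomentum g F * g⁻¹ * energyMomentum g F * g⁻¹ = k • 1 := by
    rw [← hk, ← neg_sq, ← energyMomentum_mul_inv hdet hF, sq, Matrix.mul_assoc]
  have hlower : energyMomentum g F * g⁻¹ * energyMomentum g F = k • g := by
    rw [← nonsing_inv_mul_cancel_right g (_ * energyMomentum g F) hdet, hmixed, smul_mul, one_mul]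
  rw [hmixed, hlower, trace_smul, trace_one, hn, smul_eq_mul, Nat.cast_ofNat]
  congr 1
  field_simp

theorem stmt_14_general (h2 : (2 : K) ≠ 0) (hn : Fintype.card n = 4) (hg : g.IsSymm)
    (hdet : IsUnit g.det) (hF : Fᵀ = -F) :
    (energyMomentum g F).IsSymm ∧
    trace (energyMomentum g F * g⁻¹) = 0 ∧
    energyMomentum g F * g⁻¹ * (energyMomentum g F)ᵀ =
      (1 / 4 * trace (energyMomentum g F * g⁻¹ * (energyMomentum g F)ᵀ * g⁻¹)) • g :=
  ⟨isSymm_energyMomentum hg, trace_energyMomentum_mul_inv h2 hn hdet,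
    energyMomentum_mul_inv_mul_transpose h2 hn hg hdet hF⟩

end EnergyMomentum

section IndexNotation

open Matrix

variable {n R : Type*} [Fintype n] [CommSemiring R]

lemma sum_sum_mul_eq_trace (S M : n → n → R) :
    ∑ a, ∑ b, S a b * M a b = trace (of M * (of S)ᵀ) := by
  rw [← sum_hadamard_eq]
  simp only [hadamard_apply, of_apply, mul_comm]

lemma sum_sum_mul_mul_eq_mul_mul_transpose (M S N : n → n → R) (a b : n) :
    ∑ c, ∑ d, M a c * S c d * N b d = (of M * of S * (of N)ᵀ) a b := by
  simp only [mul_apply, transpose_apply, of_apply, Finset.sum_mul]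
  exact Finset.sum_comm

lemma sum_sum_sum_sum_mul_eq_trace (S M : n → n → R) :
    ∑ c, ∑ d, ∑ e, ∑ f, S c e * S d f * M c d * M e f =
      trace (of M * of S * (of M)ᵀ * (of S)ᵀ) := by
  calc ∑ c, ∑ d, ∑ e, ∑ f, S c e * S d f * M c d * M e f
      = ∑ c, ∑ e, S c e * ∑ d, ∑ f, M c d * S d f * M e f := by
        refine Finset.sum_congr rfl fun c _ ↦ ?_
        rw [Finset.sum_comm]
        simp only [Finset.mul_sum, mul_comm, mul_left_comm]
    _ = trace (of M * of S * (of M)ᵀ * (of S)ᵀ) := by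
        simp only [sum_sum_mul_mul_eq_mul_mul_transpose]
        exact sum_sum_mul_eq_trace S _

end IndexNotation

section Minkowski

open Matrix

lemma eta_eq_diagonal : of eta = diagonal fun a ↦ if a = 0 then -1 else 1 := rfl

lemma isSymm_eta : (of eta).IsSymm := by
  rw [eta_eq_diagonal]
  exact isSymm_diagonal _

lemma eta_mul_eta : of eta * of eta = 1 := by
  rw [eta_eq_diagonal, diagonal_mul_diagonal, ← diagonal_one]
  congr 1
  ext a
  split_ifs <;> norm_num

lemma inv_eta : (of eta)⁻¹ = of eta := inv_eq_left_inv eta_mul_eta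

lemma emTensor_eq_energyMomentum (F : Fin 4 → Fin 4 → ℝ) :
    of (emTensor F) = energyMomentum (of eta) (of F) := by
  ext a b
  simp only [of_apply, emTensor, mul_comm (eta _ _) (F _ _), energyMomentum]
  rw [sum_sum_mul_mul_eq_mul_mul_transpose, sum_sum_sum_sum_mul_eq_trace, isSymm_eta.eq, inv_eta,
    Matrix.sub_apply, Matrix.smul_apply, of_apply, smul_eq_mul, mul_right_comm]

end Minkowski

/-- The energy-momentum tensor `t` of an antisymmetric 2-form `F` is symmetric,
trace-free, and satisfies `t_a{}^c t_{bc} = (1/4) η_{ab} t_{cd} t^{cd}`. -/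
theorem stmt_14 (F : Fin 4 → Fin 4 → ℝ) (hanti : ∀ a b, F a b = - F b a) :
    (∀ a b, emTensor F a b = emTensor F b a) ∧
    (∑ a : Fin 4, ∑ b : Fin 4, eta a b * emTensor F a b) = 0 ∧
    (∀ a b, (∑ c : Fin 4, ∑ d : Fin 4, emTensor F a c * eta c d * emTensor F b d)
      = (1/4) * eta a b * (∑ c : Fin 4, ∑ d : Fin 4, ∑ e : Fin 4, ∑ f : Fin 4,
          eta c e * eta d f * emTensor F c d * emTensor F e f)) := by
  have hF : (Matrix.of F).transpose = -Matrix.of F := Matrix.ext fun a b ↦ hanti b a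
  obtain ⟨hsymm, htrace, hrainich⟩ := stmt_14_general two_ne_zero (Fintype.card_fin 4) isSymm_eta
    (Matrix.isUnit_det_of_left_inverse eta_mul_eta) hF
  rw [inv_eta, ← emTensor_eq_energyMomentum] at htrace hrainich
  rw [← emTensor_eq_energyMomentum] at hsymm
  refine ⟨fun a b ↦ hsymm.apply b a, ?_, fun a b ↦ ?_⟩
  · rw [sum_sum_mul_eq_trace, isSymm_eta.eq, htrace]
  · rw [sum_sum_mul_mul_eq_mul_mul_transpose, hrainich, sum_sum_sum_sum_mul_eq_trace, isSymm_eta.eq,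
      Matrix.smul_apply, Matrix.of_apply, smul_eq_mul, mul_right_comm]
end

section
/- Let F : Fin 4 → Fin 4 → ℝ be antisymmetric and t its energy-momentum tensor. If u₁, u₂ : Fin 4 → ℝ are causal future-directed vectors (∑_{a,b} η a b · uᵢ a · uᵢ b ≤ 0 and uᵢ 0 > 0 for i = 1, 2), then ∑_{a,b} t a b · u₁ a · u₂ b ≥ 0. Moreover, for a timelike vector u (∑_{a,b} η a b · u a · u b < 0), ∑_{a,b} t a b · u a · u b = 0 if and only if F a b = 0 for all a, b. -/
section PositiveMatrices

open Matrix
open scoped ComplexOrder MatrixOrder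

theorem conjTranspose_mul_mul_eq_zero_iff_of_posDef {R m n : Type*} [Ring R] [PartialOrder R]
    [StarRing R] [Fintype n] {A : Matrix n n R} (hA : A.PosDef) {X : Matrix n m R} :
    Xᴴ * A * X = 0 ↔ X = 0 := by
  refine ⟨fun h => ?_, fun h => by rw [h, Matrix.mul_zero]⟩
  refine ext_col fun j => ?_
  by_contra hj
  have hdiag : star (X.col j) ⬝ᵥ A *ᵥ X.col j = (Xᴴ * A * X) j j := by
    rw [Matrix.mul_assoc]
    rfl
  exact (hA.dotProduct_mulVec_pos hj).ne' (by rw [hdiag, h, Matrix.zero_apply])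

variable {𝕜 n : Type*} [RCLike 𝕜] [Fintype n]

theorem trace_mul_nonneg_of_posSemidef {A B : Matrix n n 𝕜} (hA : A.PosSemidef)
    (hB : B.PosSemidef) : 0 ≤ (A * B).trace := by
  classical
  obtain ⟨C, rfl⟩ := CStarAlgebra.nonneg_iff_eq_star_mul_self.mp hA.nonneg
  rw [Matrix.mul_assoc, trace_mul_comm, star_eq_conjTranspose]
  exact (hB.mul_mul_conjTranspose_same C).trace_nonneg

theorem trace_mul_eq_zero_iff_of_posDef {A B : Matrix n n 𝕜} (hA : A.PosDef)
    (hB : B.PosSemidef) : (A * B).trace = 0 ↔ B = 0 := by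
  classical
  obtain ⟨C, rfl⟩ := CStarAlgebra.nonneg_iff_eq_mul_star_self.mp hB.nonneg
  rw [star_eq_conjTranspose, trace_mul_comm, Matrix.mul_assoc, trace_mul_comm,
    (hA.posSemidef.conjTranspose_mul_mul_same C).trace_eq_zero_iff,
    conjTranspose_mul_mul_eq_zero_iff_of_posDef hA, self_mul_conjTranspose_eq_zero]

theorem posSemidef_fin_two_of_trace_pos_of_det_nonneg {A : Matrix (Fin 2) (Fin 2) 𝕜}
    (hA : A.IsHermitian) (htrace : 0 < A.trace) (hdet : 0 ≤ A.det) : A.PosSemidef := by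
  have cayley_hamilton : A.trace • A = A * Aᴴ + A.det • 1 := by
    rw [hA.eq]
    ext i j
    fin_cases i <;> fin_cases j <;>
      simp [trace_fin_two, det_fin_two, mul_apply, Fin.sum_univ_two] <;> ring
  have h : A = A.trace⁻¹ • (A * Aᴴ + A.det • 1) := by
    rw [← cayley_hamilton, inv_smul_smul₀ htrace.ne']
  rw [h]
  exact ((posSemidef_self_mul_conjTranspose A).add (PosSemidef.one.smul hdet)).smul
    (inv_nonneg.mpr htrace.le)

end PositiveMatrices

section Spinors

open Matrix
open Complex hiding eta
open scoped ComplexOrder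

theorem sum_eta_mul_mul_self (u : Fin 4 → ℝ) :
    ∑ a, ∑ b, eta a b * u a * u b = -u 0 ^ 2 + u 1 ^ 2 + u 2 ^ 2 + u 3 ^ 2 := by
  simp only [eta, ite_mul, neg_mul, one_mul, zero_mul, Finset.sum_ite_eq, Finset.mem_univ,
    ↓reduceIte, Fin.sum_univ_four, one_ne_zero, Fin.reduceEq]
  ring

theorem time_component_ne_zero_of_timelike {u : Fin 4 → ℝ}
    (hu : ∑ a, ∑ b, eta a b * u a * u b < 0) : u 0 ≠ 0 := by
  intro h
  rw [sum_eta_mul_mul_self, h] at hu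
  linarith [sq_nonneg (u 1), sq_nonneg (u 2), sq_nonneg (u 3)]

/-- The Hermitian matrix `u 0 • 1 + ∑ i, u i • σᵢ` of a Minkowski vector `u`, where the
`σᵢ` are the Pauli matrices. It turns causality into positivity. -/
def spinMatrix (u : Fin 4 → ℝ) : Matrix (Fin 2) (Fin 2) ℂ :=
  !![u 0 + u 3, u 1 - u 2 * I; u 1 + u 2 * I, u 0 - u 3]

theorem isHermitian_spinMatrix (u : Fin 4 → ℝ) : (spinMatrix u).IsHermitian := by
  ext i j
  fin_cases i <;> fin_cases j <;> simp [spinMatrix, sub_eq_add_neg]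

theorem trace_spinMatrix (u : Fin 4 → ℝ) : (spinMatrix u).trace = (2 * u 0 : ℝ) := by
  rw [spinMatrix, trace_fin_two_of]
  push_cast
  ring

theorem det_spinMatrix (u : Fin 4 → ℝ) :
    (spinMatrix u).det = (-∑ a, ∑ b, eta a b * u a * u b : ℝ) := by
  rw [sum_eta_mul_mul_self, spinMatrix, det_fin_two_of]
  push_cast
  linear_combination u 2 ^ 2 * I_sq

theorem posSemidef_spinMatrix {u : Fin 4 → ℝ} (hu : ∑ a, ∑ b, eta a b * u a * u b ≤ 0)
    (hu₀ : 0 < u 0) : (spinMatrix u).PosSemidef := by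
  refine posSemidef_fin_two_of_trace_pos_of_det_nonneg (isHermitian_spinMatrix u) ?_ ?_
  · rw [trace_spinMatrix, zero_lt_real]
    positivity
  · rwa [det_spinMatrix, zero_le_real, neg_nonneg]

theorem posDef_spinMatrix {u : Fin 4 → ℝ} (hu : ∑ a, ∑ b, eta a b * u a * u b < 0)
    (hu₀ : 0 < u 0) : (spinMatrix u).PosDef := by
  rw [(posSemidef_spinMatrix hu.le hu₀).posDef_iff_det_ne_zero, det_spinMatrix, ofReal_ne_zero]
  exact (neg_pos.mpr hu).ne'

/-- The spinor of the electromagnetic field `(E, B)`: the symmetric matrix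
`(∑ k, (E k + i B k) • σₖ) * !![0, 1; -1, 0]`, where the `σₖ` are the Pauli matrices. -/
def maxwellSpinor (E B : Fin 3 → ℝ) : Matrix (Fin 2) (Fin 2) ℂ :=
  let f (k : Fin 3) : ℂ := E k + B k * I
  !![-f 0 + f 1 * I, f 2; f 2, f 0 + f 1 * I]

/-- The energy-momentum tensor of the electromagnetic field `(E, B)`, as a bilinear form: the terms
are those of the energy density `(|E|² + |B|²) / 2`, the Poynting vector `E × B` and the Maxwell
stress tensor. -/
noncomputable def fieldEnergyForm (E B : Fin 3 → ℝ) (u v : Fin 4 → ℝ) : ℝ :=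
  (E ⬝ᵥ E + B ⬝ᵥ B) / 2 * (u 0 * v 0 + Fin.tail u ⬝ᵥ Fin.tail v) +
    (E ⨯₃ B) ⬝ᵥ (u 0 • Fin.tail v + v 0 • Fin.tail u) -
    (E ⬝ᵥ Fin.tail u) * (E ⬝ᵥ Fin.tail v) - (B ⬝ᵥ Fin.tail u) * (B ⬝ᵥ Fin.tail v)

variable {E B : Fin 3 → ℝ} {u v : Fin 4 → ℝ}

theorem maxwellSpinor_eq_zero_iff : maxwellSpinor E B = 0 ↔ E = 0 ∧ B = 0 := by
  refine ⟨fun h => ?_, fun ⟨hE, hB⟩ => ?_⟩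
  · have h00 : -E 0 - B 1 = 0 ∧ -B 0 + E 1 = 0 := by
      simpa [maxwellSpinor, Complex.ext_iff, sub_eq_add_neg] using congr($h 0 0)
    have h01 : E 2 = 0 ∧ B 2 = 0 := by
      simpa [maxwellSpinor, Complex.ext_iff] using congr($h 0 1)
    have h11 : E 0 - B 1 = 0 ∧ B 0 + E 1 = 0 := by
      simpa [maxwellSpinor, Complex.ext_iff, sub_eq_add_neg] using congr($h 1 1)
    constructor <;> ext i <;> fin_cases i <;>
      simp only [Pi.zero_apply, Fin.reduceFinMk, Fin.zero_eta, Fin.mk_one] <;> linarith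
  · ext i j
    fin_cases i <;> fin_cases j <;> simp [maxwellSpinor, hE, hB]

theorem fieldEnergyForm_eq_trace (E B : Fin 3 → ℝ) (u v : Fin 4 → ℝ) :
    (fieldEnergyForm E B u v : ℂ) =
      ((spinMatrix v)ᵀ * ((maxwellSpinor E B)ᴴ * spinMatrix u * maxwellSpinor E B)).trace / 4 := by
  apply Complex.ext <;>
    simp [fieldEnergyForm, vec3_dotProduct, cross_apply, Fin.tail, spinMatrix, maxwellSpinor,
      trace_fin_two, mul_apply, -cons_dotProduct, -dotProduct_cons] <;>
    ring

theorem fieldEnergyForm_neg_neg (E B : Fin 3 → ℝ) (u v : Fin 4 → ℝ) :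
    fieldEnergyForm E B (-u) (-v) = fieldEnergyForm E B u v := by
  have tail_neg (w : Fin 4 → ℝ) : Fin.tail (-w) = -Fin.tail w := rfl
  simp [fieldEnergyForm, tail_neg]

theorem fieldEnergyForm_nonneg (E B : Fin 3 → ℝ) (hu : ∑ a, ∑ b, eta a b * u a * u b ≤ 0)
    (hu₀ : 0 < u 0) (hv : ∑ a, ∑ b, eta a b * v a * v b ≤ 0) (hv₀ : 0 < v 0) :
    0 ≤ fieldEnergyForm E B u v := by
  have hU := posSemidef_spinMatrix hu hu₀
  have hV := posSemidef_spinMatrix hv hv₀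
  rw [← zero_le_real, fieldEnergyForm_eq_trace]
  exact div_nonneg (trace_mul_nonneg_of_posSemidef hV.transpose (hU.conjTranspose_mul_mul_same _))
    zero_le_four

theorem fieldEnergyForm_eq_zero_iff (hu : ∑ a, ∑ b, eta a b * u a * u b < 0) (hu₀ : 0 < u 0)
    (hv : ∑ a, ∑ b, eta a b * v a * v b < 0) (hv₀ : 0 < v 0) :
    fieldEnergyForm E B u v = 0 ↔ E = 0 ∧ B = 0 := by
  have hU := posDef_spinMatrix hu hu₀
  have hV := posDef_spinMatrix hv hv₀
  rw [← ofReal_eq_zero, fieldEnergyForm_eq_trace, div_eq_zero_iff, or_iff_left (four_ne_zero' ℂ),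
    trace_mul_eq_zero_iff_of_posDef hV.transpose (hU.posSemidef.conjTranspose_mul_mul_same _),
    conjTranspose_mul_mul_eq_zero_iff_of_posDef hU, maxwellSpinor_eq_zero_iff]

theorem fieldEnergyForm_self_eq_zero_iff (hu : ∑ a, ∑ b, eta a b * u a * u b < 0) :
    fieldEnergyForm E B u u = 0 ↔ E = 0 ∧ B = 0 := by
  rcases (time_component_ne_zero_of_timelike hu).lt_or_gt with past | future
  · have hneg : ∑ a, ∑ b, eta a b * (-u) a * (-u) b < 0 := by simpa using hu
    have hneg₀ : 0 < (-u) 0 := neg_pos.mpr past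
    rw [← fieldEnergyForm_neg_neg, fieldEnergyForm_eq_zero_iff hneg hneg₀ hneg hneg₀]
  · exact fieldEnergyForm_eq_zero_iff hu future hu future

end Spinors

section Fields

open Matrix

/-- The electric part of a 2-form `F`, with the sign convention `E k = F 0 k`. -/
def electricField (F : Fin 4 → Fin 4 → ℝ) : Fin 3 → ℝ := ![F 0 1, F 0 2, F 0 3]

/-- The magnetic part of a 2-form `F`, with the sign convention `B k = F l m` for `(k, l, m)` a
cyclic permutation of `(1, 2, 3)`. -/
def magneticField (F : Fin 4 → Fin 4 → ℝ) : Fin 3 → ℝ := ![F 2 3, F 3 1, F 1 2]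

variable {F : Fin 4 → Fin 4 → ℝ}

theorem electricField_eq_zero_and_magneticField_eq_zero_iff (hF : ∀ a b, F a b = -F b a) :
    electricField F = 0 ∧ magneticField F = 0 ↔ ∀ a b, F a b = 0 := by
  refine ⟨fun ⟨hE, hB⟩ => ?_, fun h => by simp [electricField, magneticField, h]⟩
  simp only [electricField, magneticField, cons_eq_zero_iff, zero_empty, and_true] at hE hB
  obtain ⟨h01, h02, h03⟩ := hE
  obtain ⟨h23, h31, h12⟩ := hB
  have hdiag (a : Fin 4) : F a a = 0 := self_eq_neg.mp (hF a a)
  intro a b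
  fin_cases a <;> fin_cases b <;>
    simp [hdiag, hF 1 0, hF 2 0, hF 3 0, hF 3 2, hF 1 3, hF 2 1, h01, h02, h03, h23, h31, h12]

theorem sum_emTensor_mul_mul (hF : ∀ a b, F a b = -F b a) (u v : Fin 4 → ℝ) :
    ∑ a, ∑ b, emTensor F a b * u a * v b =
      fieldEnergyForm (electricField F) (magneticField F) u v := by
  have hdiag (a : Fin 4) : F a a = 0 := self_eq_neg.mp (hF a a)
  simp [Fin.sum_univ_four, emTensor, eta, hdiag, hF 1 0, hF 2 0, hF 3 0, hF 3 2, hF 1 3, hF 2 1,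
    fieldEnergyForm, electricField, magneticField, vec3_dotProduct, cross_apply, Fin.tail,
    -cons_dotProduct, -dotProduct_cons]
  ring

end Fields

/-- The energy-momentum tensor `t` of an antisymmetric 2-form `F` has the dominant
property: contracted with two causal future-directed vectors it is non-negative;
and for a timelike vector `u`, `t(u,u) = 0` if and only if `F = 0`. -/
theorem stmt_15 (F : Fin 4 → Fin 4 → ℝ) (hanti : ∀ a b, F a b = - F b a) :
    (∀ u₁ u₂ : Fin 4 → ℝ,
      ((∑ a : Fin 4, ∑ b : Fin 4, eta a b * u₁ a * u₁ b) ≤ 0 ∧ 0 < u₁ 0) →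
      ((∑ a : Fin 4, ∑ b : Fin 4, eta a b * u₂ a * u₂ b) ≤ 0 ∧ 0 < u₂ 0) →
      0 ≤ ∑ a : Fin 4, ∑ b : Fin 4, emTensor F a b * u₁ a * u₂ b) ∧
    (∀ u : Fin 4 → ℝ, (∑ a : Fin 4, ∑ b : Fin 4, eta a b * u a * u b) < 0 →
      ((∑ a : Fin 4, ∑ b : Fin 4, emTensor F a b * u a * u b) = 0
        ↔ ∀ a b, F a b = 0)) := by
  simp only [sum_emTensor_mul_mul hanti,
    ← electricField_eq_zero_and_magneticField_eq_zero_iff hanti]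
  exact ⟨fun u v ⟨hu, hu₀⟩ ⟨hv, hv₀⟩ => fieldEnergyForm_nonneg _ _ hu hu₀ hv hv₀,
    fun u hu => fieldEnergyForm_self_eq_zero_iff hu⟩
end

section
/- Let M > 0 be real. For R > 0 define N(R) := exp(2M/R)·(M − R) + M + R, D(R) := exp(2M/R)·|M − R| − |M − R| + 2M, and q(R) := 1 − (N(R)/D(R))². Then for every R > 0 one has D(R) > 0; moreover q(R) = 0 whenever 0 < R ≤ M, and q(R) > 0 whenever R > M. -/
/-!
Put `y = (exp (2M/R) - 1) (M - R)`, which has the sign of `M - R` because `exp (2M/R) > 1`.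
Then `N = y + 2M` and `D = |y| + |2M|`, so `|N| ≤ D` is the triangle inequality. It is an
equality exactly when `y` and `2M > 0` do not have opposite signs, that is, when `R ≤ M`.
-/

lemma abs_add_eq_abs_add_iff_of_pos {G : Type*} [AddCommGroup G] [LinearOrder G]
    [IsOrderedAddMonoid G] {y m : G} (hm : 0 < m) :
    |y + m| = |y| + m ↔ 0 ≤ y := by
  simpa only [abs_of_pos hm, hm.le, hm.not_ge, and_true, and_false, or_false] using
    abs_add_eq_add_abs_iff y m

section TriangleRatio

variable {K : Type*} [Field K] [LinearOrder K] [IsStrictOrderedRing K] {y m : K}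

lemma sq_add_div_abs_add_le_one (hm : 0 ≤ m) : ((y + m) / (|y| + m)) ^ 2 ≤ 1 := by
  have hden : 0 ≤ |y| + m := add_nonneg (abs_nonneg y) hm
  have htriangle : |y + m| ≤ |y| + m := by
    simpa only [abs_of_nonneg hm] using abs_add_le y m
  rw [sq_le_one_iff_abs_le_one, abs_div, abs_of_nonneg hden]
  exact div_le_one_of_le₀ htriangle hden

lemma sq_add_div_abs_add_eq_one_iff (hm : 0 < m) :
    ((y + m) / (|y| + m)) ^ 2 = 1 ↔ 0 ≤ y := by
  have hden : 0 < |y| + m := add_pos_of_nonneg_of_pos (abs_nonneg y) hm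
  rw [div_pow, div_eq_one_iff_eq (pow_pos hden 2).ne', sq_eq_sq_iff_abs_eq_abs, abs_of_pos hden,
    abs_add_eq_abs_add_iff_of_pos hm]

lemma sq_add_div_abs_add_lt_one_iff (hm : 0 < m) :
    ((y + m) / (|y| + m)) ^ 2 < 1 ↔ y < 0 := by
  rw [(sq_add_div_abs_add_le_one hm.le).lt_iff_ne, ne_eq, sq_add_div_abs_add_eq_one_iff hm,
    not_le]

end TriangleRatio

namespace CurzonChazy

/-- The numerator `N(R)` of the axis quality factor of the Curzon–Chazy metric of mass `M`. -/
noncomputable def axisNumerator (M R : ℝ) : ℝ :=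
  Real.exp (2 * M / R) * (M - R) + M + R

/-- The denominator `D(R)` of the axis quality factor of the Curzon–Chazy metric of mass `M`. -/
noncomputable def axisDenominator (M R : ℝ) : ℝ :=
  Real.exp (2 * M / R) * |M - R| - |M - R| + 2 * M

/-- The Kerr-ness quality factor `q(R)` of the Curzon–Chazy metric of mass `M`, restricted to
the axis `θ = 0`. -/
noncomputable def axisQuality (M R : ℝ) : ℝ :=
  1 - (axisNumerator M R / axisDenominator M R) ^ 2

/-- The signed deviation `y` of the numerator `N(R)` from `2M`; its sign decides whether
the axis quality factor vanishes. -/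
noncomputable def axisDeviation (M R : ℝ) : ℝ :=
  (Real.exp (2 * M / R) - 1) * (M - R)

lemma axisNumerator_eq_axisDeviation_add_two_mul (M R : ℝ) :
    axisNumerator M R = axisDeviation M R + 2 * M := by
  unfold axisNumerator axisDeviation
  ring

variable {M R : ℝ}

lemma exp_two_mul_div_sub_one_pos (hM : 0 < M) (hR : 0 < R) : 0 < Real.exp (2 * M / R) - 1 :=
  sub_pos.mpr (Real.one_lt_exp_iff.mpr (by positivity))

lemma axisDenominator_eq_abs_axisDeviation_add_two_mul (hM : 0 < M) (hR : 0 < R) :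
    axisDenominator M R = |axisDeviation M R| + 2 * M := by
  rw [axisDenominator, axisDeviation, abs_mul, abs_of_pos (exp_two_mul_div_sub_one_pos hM hR)]
  ring

lemma axisDenominator_pos (hM : 0 < M) (hR : 0 < R) : 0 < axisDenominator M R := by
  rw [axisDenominator_eq_abs_axisDeviation_add_two_mul hM hR]
  positivity

lemma axisDeviation_nonneg_iff (hM : 0 < M) (hR : 0 < R) :
    0 ≤ axisDeviation M R ↔ R ≤ M := by
  rw [axisDeviation, mul_nonneg_iff_of_pos_left (exp_two_mul_div_sub_one_pos hM hR), sub_nonneg]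

lemma axisQuality_eq_zero_iff (hM : 0 < M) (hR : 0 < R) :
    axisQuality M R = 0 ↔ R ≤ M := by
  rw [axisQuality, axisNumerator_eq_axisDeviation_add_two_mul,
    axisDenominator_eq_abs_axisDeviation_add_two_mul hM hR, sub_eq_zero, eq_comm,
    sq_add_div_abs_add_eq_one_iff (by positivity), axisDeviation_nonneg_iff hM hR]

lemma axisQuality_pos_iff (hM : 0 < M) (hR : 0 < R) : 0 < axisQuality M R ↔ M < R := by
  rw [axisQuality, axisNumerator_eq_axisDeviation_add_two_mul,
    axisDenominator_eq_abs_axisDeviation_add_two_mul hM hR, sub_pos,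
    sq_add_div_abs_add_lt_one_iff (by positivity), ← not_le, axisDeviation_nonneg_iff hM hR,
    not_le]

end CurzonChazy

/-- For the Curzon–Chazy solution with mass `M > 0`, the axis quality factor
`q(R) = 1 - (N(R)/D(R))²` with `N(R) = exp(2M/R)·(M - R) + M + R` and
`D(R) = exp(2M/R)·|M - R| - |M - R| + 2M` satisfies: `D(R) > 0` for all `R > 0`,
`q(R) = 0` for `0 < R ≤ M`, and `q(R) > 0` for `R > M`. -/
theorem stmt_16 (M : ℝ) (hM : 0 < M) :
    (∀ R : ℝ, 0 < R →
      0 < Real.exp (2*M/R) * |M - R| - |M - R| + 2*M) ∧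
    (∀ R : ℝ, 0 < R → R ≤ M →
      1 - ((Real.exp (2*M/R) * (M - R) + M + R) /
           (Real.exp (2*M/R) * |M - R| - |M - R| + 2*M))^2 = 0) ∧
    (∀ R : ℝ, M < R →
      0 < 1 - ((Real.exp (2*M/R) * (M - R) + M + R) /
           (Real.exp (2*M/R) * |M - R| - |M - R| + 2*M))^2) :=
  ⟨fun _ hR => CurzonChazy.axisDenominator_pos hM hR,
    fun _ hR hRM => (CurzonChazy.axisQuality_eq_zero_iff hM hR).mpr hRM,
    fun _ hRM => (CurzonChazy.axisQuality_pos_iff hM (hM.trans hRM)).mpr hRM⟩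
end

section
/- Let M > 0 be real and, for R > 0, set q(R) := 1 − ((exp(2M/R)·(M − R) + M + R)/(exp(2M/R)·|M − R| − |M − R| + 2M))². Then q(R) tends to 1 as R tends to +∞ (i.e. q tends to 1 along the filter atTop). -/
open Filter

/-!
Put `u(R) = (exp (2M/R) - 1) (R - M)`. The numerator of the quotient is `2M - u(R)` and, once
`R > M`, the denominator is `u(R) + 2M`. Since `exp` has value and derivative `1` at `0`, we have
`u(R) → 2M`, so the quotient tends to `0 / 4M`.
-/

lemma tendsto_mul_exp_div_sub_one_atTop (c : ℝ) :
    Tendsto (fun R : ℝ => R * (Real.exp (c / R) - 1)) atTop (nhds c) := by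
  simpa [div_eq_inv_mul] using (Real.hasDerivAt_exp 0).hasFDerivAt.lim_real c

lemma tendsto_exp_div_atTop (c : ℝ) :
    Tendsto (fun R : ℝ => Real.exp (c / R)) atTop (nhds 1) := by
  simpa using (tendsto_id.const_div_atTop c).rexp

lemma tendsto_exp_div_sub_one_mul_sub_atTop (c a : ℝ) :
    Tendsto (fun R : ℝ => (Real.exp (c / R) - 1) * (R - a)) atTop (nhds c) := by
  have h_shift : Tendsto (fun R : ℝ => a * (Real.exp (c / R) - 1)) atTop (nhds 0) := by
    simpa using ((tendsto_exp_div_atTop c).sub_const 1).const_mul a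
  have h_diff := (tendsto_mul_exp_div_sub_one_atTop c).sub h_shift
  rw [sub_zero] at h_diff
  exact h_diff.congr fun R => by ring

lemma tendsto_exp_div_mul_sub_add_add_atTop (c a b : ℝ) :
    Tendsto (fun R : ℝ => Real.exp (c / R) * (a - R) + b + R) atTop (nhds (a + b - c)) :=
  ((tendsto_exp_div_sub_one_mul_sub_atTop c a).const_sub (a + b)).congr fun R => by ring

lemma tendsto_exp_div_mul_abs_sub_sub_abs_sub_atTop (c a : ℝ) :
    Tendsto (fun R : ℝ => Real.exp (c / R) * |a - R| - |a - R|) atTop (nhds c) := by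
  refine (tendsto_exp_div_sub_one_mul_sub_atTop c a).congr' ?_
  filter_upwards [eventually_ge_atTop a] with R hR
  rw [abs_of_nonpos (sub_nonpos.mpr hR)]
  ring

theorem stmt_17_general (M : ℝ) (hM : M ≠ 0) :
    Tendsto (fun R : ℝ =>
        1 - ((Real.exp (2 * M / R) * (M - R) + M + R) /
             (Real.exp (2 * M / R) * |M - R| - |M - R| + 2 * M)) ^ 2)
      atTop (nhds 1) := by
  have h_num := tendsto_exp_div_mul_sub_add_add_atTop (2 * M) M M
  have h_den := (tendsto_exp_div_mul_abs_sub_sub_abs_sub_atTop (2 * M) M).add_const (2 * M)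
  have h_den_ne : 2 * M + 2 * M ≠ 0 := by simpa [← two_mul] using hM
  have h_num_lim : M + M - 2 * M = 0 := by ring
  simpa [h_num_lim] using ((h_num.div h_den h_den_ne).pow 2).const_sub 1

/-- For the Curzon–Chazy solution with mass `M > 0`, the axis quality factor
`q(R) = 1 - ((exp(2M/R)·(M - R) + M + R)/(exp(2M/R)·|M - R| - |M - R| + 2M))²`
tends to `1` as `R → +∞`. -/
theorem stmt_17 (M : ℝ) (hM : 0 < M) :
    Tendsto (fun R : ℝ =>
        1 - ((Real.exp (2*M/R) * (M - R) + M + R) /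
             (Real.exp (2*M/R) * |M - R| - |M - R| + 2*M))^2)
      atTop (nhds 1) :=
  stmt_17_general M hM.ne'
end

section
/- Let A, M, R, Q, θ be real numbers such that (A²·cos²θ + R²)·(A²·M²·cos²θ + (Q² − M·R)²) > 0. Then the quantity ϰ := (A²·M·cos²θ + R·(M·R − Q²))² / ((A²·cos²θ + R²)·(A²·M²·cos²θ + (Q² − M·R)²)) satisfies 0 ≤ ϰ ≤ 1; moreover, if Q = 0 then ϰ = 1. -/
/-!
The quality factor is the squared cosine of the angle between the plane vectors `(A cos θ, R)` and
`(A M cos θ, M R - Q²)`, so it lies in `[0, 1]` by Cauchy–Schwarz. Their determinant is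
`-A Q² cos θ`, hence by Lagrange's identity the value `1` is attained exactly when `A Q cos θ = 0`.
-/

theorem sq_add_sq_mul_sq_add_sq_eq_sq_dot_add_sq_det {S : Type*} [CommRing S] (a b c d : S) :
    (a ^ 2 + b ^ 2) * (c ^ 2 + d ^ 2) = (a * c + b * d) ^ 2 + (a * d - b * c) ^ 2 := by
  rw [add_comm (c ^ 2), sq_add_sq_mul_sq_add_sq, add_comm]

theorem sq_dot_le_sq_add_sq_mul_sq_add_sq {S : Type*} [CommRing S] [LinearOrder S]
    [IsStrictOrderedRing S] (a b c d : S) :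
    (a * c + b * d) ^ 2 ≤ (a ^ 2 + b ^ 2) * (c ^ 2 + d ^ 2) := by
  rw [sq_add_sq_mul_sq_add_sq_eq_sq_dot_add_sq_det]
  exact le_add_of_nonneg_right (sq_nonneg _)

theorem sq_dot_eq_sq_add_sq_mul_sq_add_sq_iff {S : Type*} [CommRing S] [IsReduced S]
    (a b c d : S) :
    (a * c + b * d) ^ 2 = (a ^ 2 + b ^ 2) * (c ^ 2 + d ^ 2) ↔ a * d = b * c := by
  rw [sq_add_sq_mul_sq_add_sq_eq_sq_dot_add_sq_det, left_eq_add, sq_eq_zero_iff, sub_eq_zero]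

/-- The quality factor `ϰ` of the Kerr–Newman solution. The polar angle enters only through its
cosine, which is the argument `c`; where the denominator vanishes the value is `0`. -/
def kerrNewmanQualityFactor {K : Type*} [Field K] (A M R Q c : K) : K :=
  (A ^ 2 * M * c ^ 2 + R * (M * R - Q ^ 2)) ^ 2 /
    ((A ^ 2 * c ^ 2 + R ^ 2) * (A ^ 2 * M ^ 2 * c ^ 2 + (Q ^ 2 - M * R) ^ 2))

namespace kerrNewmanQualityFactor

section Field

variable {K : Type*} [Field K] (A M R Q c : K)

theorem eq_sq_dot_div :
    kerrNewmanQualityFactor A M R Q c =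
      (A * c * (A * M * c) + R * (M * R - Q ^ 2)) ^ 2 /
        (((A * c) ^ 2 + R ^ 2) * ((A * M * c) ^ 2 + (M * R - Q ^ 2) ^ 2)) := by
  unfold kerrNewmanQualityFactor
  congr 1 <;> ring

variable {A M R Q c} in
theorem eq_one_iff
    (h : (A ^ 2 * c ^ 2 + R ^ 2) * (A ^ 2 * M ^ 2 * c ^ 2 + (Q ^ 2 - M * R) ^ 2) ≠ 0) :
    kerrNewmanQualityFactor A M R Q c = 1 ↔ A = 0 ∨ c = 0 ∨ Q = 0 := by
  have h_norms : ((A * c) ^ 2 + R ^ 2) * ((A * M * c) ^ 2 + (M * R - Q ^ 2) ^ 2) ≠ 0 := by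
    convert h using 1
    ring
  have det_eq : A * c * (M * R - Q ^ 2) - R * (A * M * c) = -(A * (c * Q ^ 2)) := by ring
  rw [eq_sq_dot_div, div_eq_one_iff_eq h_norms, sq_dot_eq_sq_add_sq_mul_sq_add_sq_iff,
    ← sub_eq_zero, det_eq, neg_eq_zero, mul_eq_zero, mul_eq_zero, sq_eq_zero_iff]

end Field

section LinearOrder

variable {K : Type*} [Field K] [LinearOrder K] [IsStrictOrderedRing K] (A M R Q c : K)

theorem nonneg : 0 ≤ kerrNewmanQualityFactor A M R Q c := by
  unfold kerrNewmanQualityFactor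
  positivity

theorem le_one : kerrNewmanQualityFactor A M R Q c ≤ 1 := by
  rw [eq_sq_dot_div]
  exact div_le_one_of_le₀ (sq_dot_le_sq_add_sq_mul_sq_add_sq ..) (by positivity)

end LinearOrder

end kerrNewmanQualityFactor

theorem stmt_18_general {K : Type*} [Field K] [LinearOrder K] [IsStrictOrderedRing K]
    {A M R Q c : K}
    (h : 0 < (A ^ 2 * c ^ 2 + R ^ 2) * (A ^ 2 * M ^ 2 * c ^ 2 + (Q ^ 2 - M * R) ^ 2)) :
    0 ≤ kerrNewmanQualityFactor A M R Q c ∧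
      kerrNewmanQualityFactor A M R Q c ≤ 1 ∧
      (kerrNewmanQualityFactor A M R Q c = 1 ↔ A = 0 ∨ c = 0 ∨ Q = 0) :=
  ⟨kerrNewmanQualityFactor.nonneg .., kerrNewmanQualityFactor.le_one ..,
    kerrNewmanQualityFactor.eq_one_iff h.ne'⟩

/-- For the Kerr–Newman solution, the quality factor
`ϰ = (A²·M·cos²θ + R·(M·R - Q²))² / ((A²·cos²θ + R²)·(A²·M²·cos²θ + (Q² - M·R)²))`
satisfies `0 ≤ ϰ ≤ 1` whenever the denominator is positive; moreover `ϰ = 1`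
when `Q = 0`. -/
theorem stmt_18 (A M R Q θ : ℝ)
    (h : 0 < (A^2 * (Real.cos θ)^2 + R^2) *
      (A^2 * M^2 * (Real.cos θ)^2 + (Q^2 - M*R)^2)) :
    0 ≤ (A^2 * M * (Real.cos θ)^2 + R * (M*R - Q^2))^2 /
        ((A^2 * (Real.cos θ)^2 + R^2) *
          (A^2 * M^2 * (Real.cos θ)^2 + (Q^2 - M*R)^2)) ∧
    (A^2 * M * (Real.cos θ)^2 + R * (M*R - Q^2))^2 /
        ((A^2 * (Real.cos θ)^2 + R^2) *
          (A^2 * M^2 * (Real.cos θ)^2 + (Q^2 - M*R)^2)) ≤ 1 ∧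
    (Q = 0 →
      (A^2 * M * (Real.cos θ)^2 + R * (M*R - Q^2))^2 /
        ((A^2 * (Real.cos θ)^2 + R^2) *
          (A^2 * M^2 * (Real.cos θ)^2 + (Q^2 - M*R)^2)) = 1) := by
  obtain ⟨nonneg, le_one, eq_one_iff⟩ := stmt_18_general h
  exact ⟨nonneg, le_one, fun hQ ↦ eq_one_iff.mpr (.inr (.inr hQ))⟩
end
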